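/- Let y = A x₀ + e for some x₀ ∈ ℝ^d and e ∈ ℝ^n, let β = max_{1≤i≤d} ‖a_i‖₂, and let α_{2k} > 0 satisfy ‖Ax‖₂ ≥ α_{2k} ‖x‖₁ for every x with at most 2k nonzero entries. Let λ > 0 and suppose x̂ ∈ ℝ^d is k-sparse and satisfies F2_λ(x̂) ≤ F2_λ(P_k(x₀)), where F2_λ(x) = (1/2)‖Ax − y‖₂² + λ τ_k(x). Then ‖x̂ − x₀‖₁ ≤ (2/α_{2k})‖e‖₂ + (1 + 2β/α_{2k}) τ_k(x₀). -/

import Mathlib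

open Finset Filter Topology

/-- Euclidean (ℓ₂) norm of a vector in ℝ^m. -/
noncomputable def l2norm {m : ℕ} (v : Fin m → ℝ) : ℝ := Real.sqrt (∑ i, v i ^ 2)

/-- The trimmed lasso penalty: the minimum, over index sets Λ of size d − k,
of the ℓ₁ norm of x restricted to Λ. -/
noncomputable def tauTL {d : ℕ} (k : ℕ) (x : Fin d → ℝ) : ℝ :=
  sInf ((fun Λ : Finset (Fin d) => ∑ i ∈ Λ, |x i|) '' {Λ : Finset (Fin d) | Λ.card = d - k})

/-- `p` is a k-sparse vector closest to `x` in ℓ₁ norm (a valid choice of P_k(x)). -/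
def IsKSparseProj {d : ℕ} (k : ℕ) (x p : Fin d → ℝ) : Prop :=
  Set.ncard {i : Fin d | p i ≠ 0} ≤ k ∧
  ∀ z : Fin d → ℝ, Set.ncard {i : Fin d | z i ≠ 0} ≤ k →
    (∑ i, |x i - p i|) ≤ ∑ i, |x i - z i|

theorem l2norm_eq_norm {m : ℕ} (v : Fin m → ℝ) : l2norm v = ‖WithLp.toLp 2 v‖ := by
  simp [l2norm, EuclideanSpace.norm_eq]

theorem l2norm_nonneg {m : ℕ} (v : Fin m → ℝ) : 0 ≤ l2norm v := Real.sqrt_nonneg _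

theorem l2norm_sub_le {m : ℕ} (u v : Fin m → ℝ) : l2norm (u - v) ≤ l2norm u + l2norm v := by
  simp only [l2norm_eq_norm, WithLp.toLp_sub]
  exact norm_sub_le _ _

/-- The `ℓ₁ → ℓ₂` operator norm of a matrix is at most its largest column norm. -/
theorem l2norm_mulVec_le {n d : ℕ} (A : Matrix (Fin n) (Fin d) ℝ) (x : Fin d → ℝ) :
    l2norm (A.mulVec x) ≤ (⨆ i : Fin d, l2norm (fun j => A j i)) * ∑ i, |x i| := by
  have hcols : A.mulVec x = ∑ i, x i • fun j => A j i := by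
    ext j
    simp [Matrix.mulVec, dotProduct, Finset.sum_apply, mul_comm]
  rw [hcols, l2norm_eq_norm, WithLp.toLp_sum, Finset.mul_sum]
  refine (norm_sum_le _ _).trans (Finset.sum_le_sum fun i _ => ?_)
  rw [WithLp.toLp_smul, norm_smul, Real.norm_eq_abs, mul_comm, ← l2norm_eq_norm]
  exact mul_le_mul_of_nonneg_right
    (le_ciSup (f := fun i => l2norm fun j => A j i) (Set.finite_range _).bddAbove i)
    (abs_nonneg _)

theorem tauTL_nonneg {d : ℕ} (k : ℕ) (x : Fin d → ℝ) : 0 ≤ tauTL k x := by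
  refine Real.sInf_nonneg ?_
  rintro _ ⟨Λ, -, rfl⟩
  exact Finset.sum_nonneg fun i _ => abs_nonneg _

theorem tauTL_le_sum {d k : ℕ} (x : Fin d → ℝ) {Λ : Finset (Fin d)} (hΛ : Λ.card = d - k) :
    tauTL k x ≤ ∑ i ∈ Λ, |x i| :=
  csInf_le ((Set.toFinite _).image _).bddBelow ⟨Λ, hΛ, rfl⟩

theorem tauTL_eq_zero_of_sparse {d k : ℕ} {x : Fin d → ℝ}
    (hx : Set.ncard {i : Fin d | x i ≠ 0} ≤ k) : tauTL k x = 0 := by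
  have hzeros : d - k ≤ (univ.filter fun i => x i = 0).card := by
    have hsplit := Finset.card_filter_add_card_filter_not (s := univ) fun i : Fin d => x i = 0
    have hsupp : Set.ncard {i : Fin d | x i ≠ 0} = (univ.filter fun i => ¬ x i = 0).card := by
      rw [← Set.ncard_coe_finset]
      simp
    rw [Finset.card_univ, Fintype.card_fin] at hsplit
    omega
  obtain ⟨Λ, hΛ, hcard⟩ := Finset.exists_subset_card_eq hzeros
  refine le_antisymm ((tauTL_le_sum x hcard).trans_eq ?_) (tauTL_nonneg k x)
  exact Finset.sum_eq_zero fun i hi => by simp [(Finset.mem_filter.mp (hΛ hi)).2]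

theorem IsKSparseProj.sum_abs_sub_le {d k : ℕ} (hkd : k ≤ d) {x p : Fin d → ℝ}
    (hp : IsKSparseProj k x p) : ∑ i, |x i - p i| ≤ tauTL k x := by
  obtain ⟨Λ₀, -, hΛ₀⟩ := Finset.exists_subset_card_eq
    (s := (univ : Finset (Fin d))) (n := d - k) (by simp)
  refine le_csInf ⟨_, Λ₀, hΛ₀, rfl⟩ ?_
  rintro _ ⟨Λ, hΛ, rfl⟩
  refine (hp.2 (fun i => if i ∈ Λ then 0 else x i) ?_).trans_eq ?_
  · have hsub : {i : Fin d | (if i ∈ Λ then 0 else x i) ≠ 0} ⊆ ((Λᶜ : Finset (Fin d)) : Set _) := by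
      intro i hi
      by_contra h
      simp_all
    refine (Set.ncard_le_ncard hsub (Set.toFinite _)).trans ?_
    rw [Set.ncard_coe_finset, Finset.card_compl, Fintype.card_fin, hΛ]
    omega
  · rw [← Finset.sum_subset (Finset.subset_univ Λ)]
    · exact Finset.sum_congr rfl fun i hi => by simp [hi]
    · intro i _ hi
      simp [hi]

theorem ncard_support_sub_le {d k : ℕ} {x z : Fin d → ℝ}
    (hx : Set.ncard {i : Fin d | x i ≠ 0} ≤ k) (hz : Set.ncard {i : Fin d | z i ≠ 0} ≤ k) :
    Set.ncard {i : Fin d | (x - z) i ≠ 0} ≤ 2 * k := by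
  have hsub : {i : Fin d | (x - z) i ≠ 0} ⊆ {i | x i ≠ 0} ∪ {i | z i ≠ 0} := by
    intro i hi
    by_contra h
    simp_all
  have := Set.ncard_le_ncard hsub (Set.toFinite _)
  have := Set.ncard_union_le {i : Fin d | x i ≠ 0} {i | z i ≠ 0}
  omega

/-- Sparse recovery guarantee for the power-2 trimmed-lasso objective,
when the candidate solution x̂ is itself k-sparse. -/
theorem stmt5 {n d : ℕ} (k : ℕ) (hk : 0 < k) (hkd : k < d)
    (A : Matrix (Fin n) (Fin d) ℝ) (y : Fin n → ℝ)
    (x0 : Fin d → ℝ) (e : Fin n → ℝ) (hy : y = A.mulVec x0 + e)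
    (α : ℝ) (hα : 0 < α)
    (hrip : ∀ x : Fin d → ℝ, Set.ncard {i : Fin d | x i ≠ 0} ≤ 2 * k →
      α * (∑ i, |x i|) ≤ l2norm (A.mulVec x))
    (lam : ℝ) (hlam : 0 < lam)
    (xhat px0 : Fin d → ℝ)
    (hxhatsparse : Set.ncard {i : Fin d | xhat i ≠ 0} ≤ k)
    (hpx0 : IsKSparseProj k x0 px0)
    (hopt : (1 / 2) * (l2norm (A.mulVec xhat - y)) ^ 2 + lam * tauTL k xhat ≤
            (1 / 2) * (l2norm (A.mulVec px0 - y)) ^ 2 + lam * tauTL k px0) :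
    (∑ i, |xhat i - x0 i|) ≤
      (2 / α) * l2norm e +
      (1 + 2 * (⨆ i : Fin d, l2norm (fun j => A j i)) / α) * tauTL k x0 := by
  have hfit : l2norm (A.mulVec xhat - y) ≤ l2norm (A.mulVec px0 - y) := by
    rw [tauTL_eq_zero_of_sparse hxhatsparse, tauTL_eq_zero_of_sparse hpx0.1] at hopt
    exact (sq_le_sq₀ (l2norm_nonneg _) (l2norm_nonneg _)).mp (by linarith)
  set β := ⨆ i : Fin d, l2norm (fun j => A j i)
  have hβ : 0 ≤ β := Real.iSup_nonneg fun i => l2norm_nonneg _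
  have hproj := hpx0.sum_abs_sub_le hkd.le
  have hres : l2norm (A.mulVec px0 - y) ≤ β * tauTL k x0 + l2norm e := by
    have hdecomp : A.mulVec px0 - y = A.mulVec (px0 - x0) - e := by
      rw [hy, Matrix.mulVec_sub]
      abel
    rw [hdecomp]
    refine (l2norm_sub_le _ _).trans (add_le_add_left ?_ _)
    refine (l2norm_mulVec_le A _).trans (mul_le_mul_of_nonneg_left ?_ hβ)
    simpa only [Pi.sub_apply, abs_sub_comm] using hproj
  have hdiff : α * ∑ i, |xhat i - px0 i| ≤ 2 * (β * tauTL k x0 + l2norm e) := by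
    have hdecomp : A.mulVec (xhat - px0) = (A.mulVec xhat - y) - (A.mulVec px0 - y) := by
      rw [Matrix.mulVec_sub]
      abel
    have hlower := hrip (xhat - px0) (ncard_support_sub_le hxhatsparse hpx0.1)
    have hupper := l2norm_sub_le (A.mulVec xhat - y) (A.mulVec px0 - y)
    rw [hdecomp] at hlower
    simp only [Pi.sub_apply] at hlower
    linarith
  have htri : ∑ i, |xhat i - x0 i| ≤ ∑ i, |xhat i - px0 i| + ∑ i, |x0 i - px0 i| := by
    rw [← Finset.sum_add_distrib]
    refine Finset.sum_le_sum fun i _ => ?_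
    rw [abs_sub_comm (x0 i)]
    exact abs_sub_le _ _ _
  calc ∑ i, |xhat i - x0 i|
      ≤ 2 * (β * tauTL k x0 + l2norm e) / α + tauTL k x0 :=
        htri.trans (add_le_add ((le_div_iff₀' hα).mpr hdiff) hproj)
    _ = (2 / α) * l2norm e + (1 + 2 * β / α) * tauTL k x0 := by
        field_simp
        ring
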